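/- Let k be an algebraically closed field of characteristic 0 and let λ be a symplectic partition of 2n whose number of parts p satisfies j := 2n − p < n. Then the Zariski closure in Mat_{2n}(k) of the set {x + y : x, y ∈ O_λ ∩ sp_{2n}(k)} equals {M ∈ sp_{2n}(k) : rank(M) ≤ 2j}; that is, the conical secant variety of this nilpotent Sp_{2n}-orbit is the symmetric determinantal variety Sym_{2j}(2n) viewed inside sp_{2n}. -/

import Mathlib

open Matrix

noncomputable section

/-- The Zariski closure of a set of `N × N` matrices. -/
def zClosure {k : Type*} [CommRing k] {N : ℕ}
    (S : Set (Matrix (Fin N) (Fin N) k)) : Set (Matrix (Fin N) (Fin N) k) :=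
  {M | ∀ P : MvPolynomial (Fin N × Fin N) k,
      (∀ x ∈ S, MvPolynomial.eval (fun q => x q.1 q.2) P = 0) →
      MvPolynomial.eval (fun q => M q.1 q.2) P = 0}

/-- The set of nilpotent matrices of Jordan type `lam`. -/
def jordanOrbit (k : Type*) [Field k] (N : ℕ) {p : ℕ} (lam : Fin p → ℕ) :
    Set (Matrix (Fin N) (Fin N) k) :=
  {M | ∀ i : ℕ, 1 ≤ i → (M ^ i).rank = ∑ l, (lam l - i)}

/-- The standard symplectic form matrix `J = [[0, I_n], [−I_n, 0]]`. -/
def Jmat (k : Type*) [CommRing k] (n : ℕ) : Matrix (Fin (2 * n)) (Fin (2 * n)) k :=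
  Matrix.of fun i j =>
    if (i : ℕ) + n = (j : ℕ) then 1 else if (j : ℕ) + n = (i : ℕ) then -1 else 0

/-- The symplectic Lie algebra `sp_{2n}(k) = {M : Mᵀ J + J M = 0}`. -/
def spSet (k : Type*) [CommRing k] (n : ℕ) : Set (Matrix (Fin (2 * n)) (Fin (2 * n)) k) :=
  {M | Mᵀ * Jmat k n + Jmat k n * M = 0}

/-- A partition is symplectic if each odd part occurs with even multiplicity. -/
def IsSymplecticParts {p : ℕ} (lam : Fin p → ℕ) : Prop :=
  ∀ m : ℕ, Odd m → Even ((Finset.univ.filter (fun l => lam l = m)).card)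

/-!
`M ↦ J * M` turns `sp_{2n}` into the symmetric matrices, so an element of rank at most `2j` is
`J * (W * Wᵀ)` with `W` of size `2n × 2j`; write `T = Wᵀ * J * W`, a skew matrix.

Let `ω` be a skew `j × j` matrix of Jordan type `(λ₁ - 1, …, λ_p - 1)`. If `V` has size `2n × j`,
full rank, and `Vᵀ * J * V` a nonzero multiple of `ω`, then `J * (V * Vᵀ)` lies in the orbit: its
powers have the ranks of the powers of `ω`, shifted by one. Such an `ω` is built from a
Jordan matrix that is skew-adjoint for a symmetric form, whose existence is where the parity
condition on `λ` enters. If `A`, `B` span isotropic subspaces in perfect duality under `J`, then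
`V = A + t B ω` has `Vᵀ * J * V = 2 t ω`, so letting `t → 0` puts `J * (A * Aᵀ)` into the closure
of the orbit; by symmetry `J * (B * Bᵀ)` lies there too.

If `T` has separable characteristic polynomial, its eigenvalues come in pairs `±ρ`, and an
orthogonal change of basis of the columns of `W` brings `T` to the form `[[0, D], [-D, 0]]`. Hence
`W * Wᵀ = A * Aᵀ + B * Bᵀ` with `A`, `B` as above, and `J * (W * Wᵀ)` is in the closure of the sums
of orbit elements. Separability is an open condition on `W`, and since `j ≤ n` some `W₀` satisfies
it; joining `W` to `W₀` by a line gives the general case.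
-/

section ZariskiClosure

variable {k : Type*} [Field k] {N : ℕ} {S T : Set (Matrix (Fin N) (Fin N) k)}
  {M x y : Matrix (Fin N) (Fin N) k}

theorem subset_zClosure (S : Set (Matrix (Fin N) (Fin N) k)) : S ⊆ zClosure S :=
  fun x hx _ hP => hP x hx

theorem add_right_mem_zClosure (hx : x ∈ zClosure S) (h : ∀ s ∈ S, s + y ∈ zClosure T) :
    x + y ∈ zClosure T := by
  intro P hP
  have translate (z : Matrix (Fin N) (Fin N) k) :
      MvPolynomial.eval (fun q => z q.1 q.2)
          (MvPolynomial.bind₁ (fun q => MvPolynomial.X q + MvPolynomial.C (y q.1 q.2)) P)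
        = MvPolynomial.eval (fun q => (z + y) q.1 q.2) P := by
    simp only [← MvPolynomial.coe_aeval_eq_eval, RingHom.coe_coe, MvPolynomial.aeval_bind₁,
      map_add, MvPolynomial.aeval_X, MvPolynomial.aeval_C, Algebra.algebraMap_self_apply,
      Matrix.add_apply]
  rw [← translate]
  exact hx _ fun s hs => (translate s).trans (h s hs P hP)

theorem add_mem_zClosure_image2_add (hx : x ∈ zClosure S) (hy : y ∈ zClosure T) :
    x + y ∈ zClosure (Set.image2 (· + ·) S T) := by
  refine add_right_mem_zClosure hx fun s hs => ?_
  rw [add_comm]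
  refine add_right_mem_zClosure hy fun t ht => ?_
  rw [add_comm]
  exact subset_zClosure _ (Set.mem_image2_of_mem hs ht)

open Polynomial in
theorem map_eval_mem_zClosure [Infinite k] (f : Matrix (Fin N) (Fin N) k[X]) {D : k[X]}
    (hD : D ≠ 0) (h : ∀ t, D.eval t ≠ 0 → f.map (eval t) ∈ zClosure S) (s : k) :
    f.map (eval s) ∈ zClosure S := by
  intro P hP
  let Q : k[X] := MvPolynomial.aeval (fun q => f q.1 q.2) P
  have eval_Q (t : k) : MvPolynomial.eval (fun q => f.map (eval t) q.1 q.2) P = Q.eval t := by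
    have := MvPolynomial.comp_aeval_apply (fun q : Fin N × Fin N => f q.1 q.2) (aeval t) P
    simpa [MvPolynomial.coe_aeval_eq_eval] using this.symm
  have hQD : Q * D = 0 := by
    refine Polynomial.funext fun t => ?_
    rw [eval_mul, eval_zero, mul_eq_zero, ← eval_Q, or_iff_not_imp_right]
    exact fun ht => h t ht P hP
  rw [eval_Q, (mul_eq_zero.mp hQD).resolve_right hD, eval_zero]

theorem mem_spSet_of_mem_zClosure {n : ℕ} {S : Set (Matrix (Fin (2 * n)) (Fin (2 * n)) k)}
    (hS : S ⊆ spSet k n) {M : Matrix (Fin (2 * n)) (Fin (2 * n)) k} (hM : M ∈ zClosure S) :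
    M ∈ spSet k n := by
  ext a b
  let X := mvPolynomialX (Fin (2 * n)) (Fin (2 * n)) k
  let J := (Jmat k n).map (MvPolynomial.C (σ := Fin (2 * n) × Fin (2 * n)))
  have eval_entry (x : Matrix (Fin (2 * n)) (Fin (2 * n)) k) :
      MvPolynomial.eval (fun q => x q.1 q.2) ((Xᵀ * J + J * X) a b)
        = (xᵀ * Jmat k n + Jmat k n * x) a b := by
    simp [X, J, Matrix.mul_apply]
  rw [← eval_entry]
  refine hM _ fun x hx => ?_
  rw [eval_entry, show xᵀ * Jmat k n + Jmat k n * x = 0 from hS hx, Matrix.zero_apply]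

theorem exists_mul_mul_eq_one {m : Type*} [Fintype m] (M : Matrix m m k) :
    ∃ (E : Matrix (Fin M.rank) m k) (F : Matrix m (Fin M.rank) k), E * M * F = 1 := by
  classical
  obtain ⟨V, U, e, -, -, hVU⟩ := exists_rank_normal_form M
  refine ⟨V.submatrix (e.symm ∘ Sum.inl) id, U.submatrix id (e.symm ∘ Sum.inl), ?_⟩
  calc _ = (V * M * U).submatrix (e.symm ∘ Sum.inl) (e.symm ∘ Sum.inl) := rfl
    _ = 1 := by
      rw [hVU]
      ext a b
      simp

theorem rank_le_of_mem_zClosure {r : ℕ} (hS : ∀ x ∈ S, x.rank ≤ r) (hM : M ∈ zClosure S) :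
    M.rank ≤ r := by
  by_contra! hlt
  obtain ⟨E, F, hEF⟩ := exists_mul_mul_eq_one M
  let c : k →+* MvPolynomial (Fin N × Fin N) k := MvPolynomial.C
  let minor := (E.map c * mvPolynomialX (Fin N) (Fin N) k * F.map c).det
  have eval_minor (x : Matrix (Fin N) (Fin N) k) :
      MvPolynomial.eval (fun q => x q.1 q.2) minor = (E * x * F).det := by
    rw [RingHom.map_det]
    congr 1
    ext a b
    simp [c, Matrix.mul_apply]
  have hminor := hM minor fun x hx => by
    rw [eval_minor]
    by_contra hne
    have hle : (E * x * F).rank ≤ x.rank :=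
      (rank_mul_le_left _ _).trans (rank_mul_le_right _ _)
    rw [rank_of_det_ne_zero hne, Fintype.card_fin] at hle
    exact absurd (hle.trans (hS x hx)) hlt.not_ge
  rw [eval_minor, hEF, det_one] at hminor
  exact one_ne_zero hminor

end ZariskiClosure

section MatrixLines

open Polynomial

variable {m ι k : Type*} [CommRing k]

/-- The line `t ↦ W + t • Y` in a space of matrices, as a matrix over the polynomial ring. -/
def matrixLine (W Y : Matrix m ι k) : Matrix m ι k[X] :=
  W.map C + (X : k[X]) • Y.map C

theorem matrixLine_map_eval (W Y : Matrix m ι k) (t : k) :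
    (matrixLine W Y).map (eval t) = W + t • Y := by
  ext a b
  simp [matrixLine, mul_comm t]

theorem map_C_map_eval (W : Matrix m ι k) (t : k) : (W.map C).map (eval t) = W := by
  ext a b
  simp

theorem map_eval_mul {m' : Type*} [Fintype ι] (A : Matrix m ι k[X]) (B : Matrix ι m' k[X]) (t : k) :
    (A * B).map (eval t) = A.map (eval t) * B.map (eval t) :=
  Matrix.map_mul (f := evalRingHom t)

theorem mul_mul_transpose_mem_zClosure_of_line {k : Type*} [Field k] [Infinite k] [Fintype ι]
    {N : ℕ} {S : Set (Matrix (Fin N) (Fin N) k)} (K : Matrix (Fin N) (Fin N) k)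
    (W Y : Matrix (Fin N) ι k) {D : k[X]} (hD : D ≠ 0)
    (h : ∀ t, D.eval t ≠ 0 → K * ((W + t • Y) * (W + t • Y)ᵀ) ∈ zClosure S) :
    K * (W * Wᵀ) ∈ zClosure S := by
  have curve_eval (t : k) :
      (K.map C * (matrixLine W Y * (matrixLine W Y)ᵀ)).map (eval t)
        = K * ((W + t • Y) * (W + t • Y)ᵀ) := by
    simp only [map_eval_mul, transpose_map, map_C_map_eval, matrixLine_map_eval]
  simpa only [curve_eval, zero_smul, add_zero] using
    map_eval_mem_zClosure (K.map C * (matrixLine W Y * (matrixLine W Y)ᵀ)) hD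
      (fun t ht => by rw [curve_eval]; exact h t ht) 0

theorem separable_iff_resultant_derivative_ne_zero {k : Type*} [Field k] {f : k[X]}
    (hf : f.Monic) :
    f.Separable ↔ resultant f f.derivative f.natDegree (f.natDegree - 1) ≠ 0 := by
  obtain ⟨r, hr⟩ := Nat.exists_eq_add_of_le (natDegree_derivative_le f)
  rw [hr, resultant_add_right_deg _ _ _ _ _ le_rfl, coeff_natDegree, hf.leadingCoeff, one_pow,
    one_mul, ← isUnit_iff_ne_zero, isUnit_resultant_iff_isCoprime hf]
  rfl

theorem exists_forall_eval_ne_zero_iff_separable_charpoly {k : Type*} [Field k] [Fintype ι]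
    [DecidableEq ι] (T : Matrix ι ι k[X]) :
    ∃ D : k[X], ∀ t, D.eval t ≠ 0 ↔ (T.map (eval t)).charpoly.Separable := by
  refine ⟨resultant T.charpoly T.charpoly.derivative (Fintype.card ι) (Fintype.card ι - 1),
    fun t => ?_⟩
  rw [separable_iff_resultant_derivative_ne_zero (charpoly_monic _), charpoly_natDegree_eq_dim,
    ← coe_evalRingHom, charpoly_map, derivative_map, resultant_map_map]

end MatrixLines

section Rank

variable {m m' ι ι' k : Type*} [Field k]

theorem matrix_rank_add_le [Finite m] [Fintype m'] (A B : Matrix m m' k) :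
    (A + B).rank ≤ A.rank + B.rank := by
  rw [Matrix.rank, mulVecLin_add]
  exact (Submodule.finrank_mono (LinearMap.range_add_le _ _)).trans
    (Submodule.finrank_add_le_finrank_add_finrank _ _)

variable [Fintype m] [Fintype m'] [Fintype ι] [Fintype ι'] [DecidableEq ι]

theorem rank_mul_mul_of_left_inv_of_right_inv [DecidableEq ι'] {A : Matrix m ι k}
    {L : Matrix ι m k} {B : Matrix ι' m' k} {R : Matrix m' ι' k} (hL : L * A = 1) (hR : B * R = 1)
    (X : Matrix ι ι' k) :
    (A * X * B).rank = X.rank := by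
  refine le_antisymm ((rank_mul_le_left _ _).trans (rank_mul_le_right _ _)) ?_
  calc X.rank = (L * (A * X * B) * R).rank := by
        congr 1
        calc X = L * A * X * (B * R) := by rw [hL, hR, Matrix.one_mul, Matrix.mul_one]
          _ = L * (A * X * B) * R := by simp only [Matrix.mul_assoc]
    _ ≤ (A * X * B).rank := (rank_mul_le_left _ _).trans (rank_mul_le_right _ _)

theorem mul_pow_succ_eq {R : Type*} [Semiring R] [DecidableEq m] (A : Matrix m ι R)
    (B : Matrix ι m R) (i : ℕ) :
    (A * B) ^ (i + 1) = A * (B * A) ^ i * B := by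
  induction i with
  | zero => rw [zero_add, pow_one, pow_zero, Matrix.mul_one]
  | succ i ih => rw [pow_succ, ih, pow_succ]; simp only [Matrix.mul_assoc]

theorem rank_mul_pow_succ [DecidableEq m] {A R : Matrix m ι k} {B L : Matrix ι m k}
    (hL : L * A = 1) (hR : B * R = 1) (i : ℕ) :
    ((A * B) ^ (i + 1)).rank = ((B * A) ^ i).rank := by
  rw [mul_pow_succ_eq, rank_mul_mul_of_left_inv_of_right_inv hL hR]

end Rank

section SymmetricMatrices

variable {m ι k : Type*} [Fintype m] [Field k]

theorem exists_eq_transpose_mul_diagonal_mul [DecidableEq m] [NeZero (2 : k)]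
    {S : Matrix m m k} (hS : S.IsSymm) :
    ∃ (R : Matrix m m k) (d : m → k), IsUnit R ∧ S = Rᵀ * diagonal d * R := by
  have : Invertible (2 : k) := invertibleOfNonzero two_ne_zero
  have form_isSymm : LinearMap.IsSymm (toBilin' S) := ⟨fun x y => by
    rw [RingHom.id_apply, toBilin'_apply', toBilin'_apply', dotProduct_mulVec, ← mulVec_transpose,
      hS.eq, dotProduct_comm]⟩
  obtain ⟨v, hv⟩ := LinearMap.BilinForm.exists_orthogonal_basis form_isSymm
  let b := v.reindex (Fintype.equivOfCardEq (by simp) : _ ≃ m)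
  have gram_diagonal : LinearMap.BilinForm.toMatrix b (toBilin' S)
      = diagonal fun i => toBilin' S (b i) (b i) := by
    ext i l
    rw [LinearMap.BilinForm.toMatrix_apply]
    obtain rfl | hil := eq_or_ne i l
    · rw [diagonal_apply_eq]
    · rw [diagonal_apply_ne _ hil]
      simpa [b] using hv ((Equiv.injective _).ne hil)
  refine ⟨b.toMatrix (Pi.basisFun k m), fun i => toBilin' S (b i) (b i),
    IsUnit.of_mul_eq_one _ (b.toMatrix_mul_toMatrix_flip _), ?_⟩
  rw [← gram_diagonal, LinearMap.BilinForm.toMatrix_mul_basis_toMatrix,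
    LinearMap.BilinForm.toMatrix_basisFun, LinearMap.BilinForm.toMatrix'_toBilin']

theorem exists_diagonal_eq_mul_transpose [DecidableEq m] [IsAlgClosed k] [Fintype ι]
    {d : m → k} (hd : (diagonal d).rank ≤ Fintype.card ι) :
    ∃ E : Matrix m ι k, diagonal d = E * Eᵀ := by
  classical
  rw [rank_diagonal] at hd
  obtain ⟨g⟩ := Function.Embedding.nonempty_of_card_le hd
  choose s hs using fun i => IsAlgClosed.exists_eq_mul_self (d i)
  refine ⟨of fun i c => if h : d i ≠ 0 then if g ⟨i, h⟩ = c then s i else 0 else 0, ?_⟩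
  ext i l
  simp only [mul_apply, transpose_apply, of_apply, diagonal_apply]
  by_cases hi : d i = 0
  · simp [hi]
  by_cases hl : d l = 0
  · have hil : i ≠ l := fun h => hi (h ▸ hl)
    simp [hl, hil]
  by_cases hil : i = l
  · subst hil
    simp [hi, ← hs]
  · simp [hi, hl, hil, g.injective.eq_iff]

theorem exists_eq_mul_transpose [IsAlgClosed k] [NeZero (2 : k)] [Fintype ι] {S : Matrix m m k}
    (hS : S.IsSymm) (hr : S.rank ≤ Fintype.card ι) : ∃ W : Matrix m ι k, S = W * Wᵀ := by
  classical
  obtain ⟨R, d, hR, rfl⟩ := exists_eq_transpose_mul_diagonal_mul hS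
  have hRdet : IsUnit R.det := (isUnit_iff_isUnit_det R).mp hR
  rw [rank_mul_eq_left_of_isUnit_det R _ hRdet,
    rank_mul_eq_right_of_isUnit_det _ _ (R.isUnit_det_transpose hRdet)] at hr
  obtain ⟨E, hE⟩ := exists_diagonal_eq_mul_transpose hr
  exact ⟨Rᵀ * E, by simp only [hE, transpose_mul, transpose_transpose, Matrix.mul_assoc]⟩

end SymmetricMatrices

section CoordinateProjections

variable {l m k : Type*} [NonAssocSemiring k] [DecidableEq m]

/-- The matrix of the map `v ↦ v ∘ f` between spaces of coordinate vectors. -/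
def coordProj (k : Type*) [NonAssocSemiring k] (f : l → m) : Matrix l m k :=
  (1 : Matrix m m k).submatrix f id

theorem coordProj_mul_mul_transpose [Fintype m] (f : l → m) (S : Matrix m m k) :
    coordProj k f * S * (coordProj k f)ᵀ = S.submatrix f f := by
  rw [coordProj, transpose_submatrix, transpose_one, ← submatrix_id_id S,
    ← submatrix_mul _ _ _ _ _ Function.bijective_id,
    ← submatrix_mul _ _ _ _ _ Function.bijective_id, Matrix.one_mul, Matrix.mul_one]
  rfl

theorem coordProj_mul_transpose [Fintype m] {n : Type*} (f : l → m) (g : n → m) :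
    coordProj k f * (coordProj k g)ᵀ = (1 : Matrix m m k).submatrix f g := by
  rw [coordProj, coordProj, transpose_submatrix, transpose_one,
    ← submatrix_mul _ _ _ _ _ Function.bijective_id, Matrix.one_mul]

theorem coordProj_mul_transpose_self [Fintype m] [DecidableEq l] {f : l → m}
    (hf : Function.Injective f) : coordProj k f * (coordProj k f)ᵀ = 1 := by
  rw [coordProj_mul_transpose, submatrix_one _ hf]

end CoordinateProjections

section JordanShift

variable {L k : Type*} {μ : L → ℕ}

theorem sigma_fin_ext {x y : Σ l, Fin (μ l)} (h : x.1 = y.1) (h' : (x.2 : ℕ) = y.2) : x = y :=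
  Sigma.ext h ((Fin.heq_ext_iff (congrArg μ h)).mpr h')

theorem sigma_fin_ext_iff {x y : Σ l, Fin (μ l)} : x = y ↔ x.1 = y.1 ∧ (x.2 : ℕ) = y.2 :=
  ⟨by rintro rfl; exact ⟨rfl, rfl⟩, fun h => sigma_fin_ext h.1 h.2⟩

/-- The nilpotent matrix in Jordan form with blocks of sizes `μ l`: on the index type
`Σ l, Fin (μ l)` it maps the `q`-th basis vector of each block to the `(q + 1)`-st. -/
def jordanShift (k : Type*) [Zero k] [One k] [DecidableEq L] (μ : L → ℕ) :
    Matrix (Σ l, Fin (μ l)) (Σ l, Fin (μ l)) k :=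
  of fun x y => if x.1 = y.1 ∧ (x.2 : ℕ) = y.2 + 1 then 1 else 0

/-- The inclusion of shortened blocks that misses the last index of each block; together with
`blockSucc` it factors `jordanShift`. -/
def blockIncl (μ : L → ℕ) (z : Σ l, Fin (μ l - 1)) : Σ l, Fin (μ l) :=
  ⟨z.1, z.2, by omega⟩

/-- The inclusion of shortened blocks that misses the first index of each block. -/
def blockSucc (μ : L → ℕ) (z : Σ l, Fin (μ l - 1)) : Σ l, Fin (μ l) :=
  ⟨z.1, z.2 + 1, by omega⟩

theorem blockIncl_injective (μ : L → ℕ) : Function.Injective (blockIncl μ) := fun _ _ h =>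
  have ⟨h₁, h₂⟩ := sigma_fin_ext_iff.mp h
  sigma_fin_ext h₁ h₂

theorem blockSucc_injective (μ : L → ℕ) : Function.Injective (blockSucc μ) := fun _ _ h =>
  have ⟨h₁, h₂⟩ := sigma_fin_ext_iff.mp h
  sigma_fin_ext h₁ (Nat.succ.inj h₂)

variable [DecidableEq L] [Fintype L]

theorem jordanShift_eq_transpose_mul [NonAssocSemiring k] (μ : L → ℕ) :
    jordanShift k μ = (coordProj k (blockSucc μ))ᵀ * coordProj k (blockIncl μ) := by
  ext x y
  simp only [coordProj, mul_apply, transpose_apply, submatrix_apply, id, one_apply, mul_ite,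
    mul_one, mul_zero]
  by_cases hy : (y.2 : ℕ) < μ y.1 - 1
  · have hz (z) : blockIncl μ z = y ↔ z = ⟨y.1, y.2, hy⟩ := (blockIncl_injective μ).eq_iff' rfl
    simp only [hz, Finset.sum_ite_eq', Finset.mem_univ, if_true]
    have hx : x = blockSucc μ ⟨y.1, y.2, hy⟩ ↔ _ := sigma_fin_ext_iff
    exact if_congr (hx.symm.trans eq_comm) rfl rfl
  · rw [jordanShift, of_apply, if_neg, Finset.sum_eq_zero]
    · rintro z -
      rw [if_neg]
      rintro rfl
      exact hy z.2.2
    · rintro ⟨h, h'⟩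
      have := x.2.2
      rw [h', h] at this
      omega

theorem jordanShift_sub_one_eq_mul_transpose [NonAssocSemiring k] (μ : L → ℕ) :
    jordanShift k (fun l => μ l - 1)
      = coordProj k (blockIncl μ) * (coordProj k (blockSucc μ))ᵀ := by
  rw [coordProj_mul_transpose]
  ext x y
  exact if_congr (sigma_fin_ext_iff (x := blockIncl μ x) (y := blockSucc μ y)).symm rfl rfl

theorem rank_jordanShift_pow [Field k] (μ : L → ℕ) (i : ℕ) :
    (jordanShift k μ ^ i).rank = ∑ l, (μ l - i) := by
  induction i generalizing μ with
  | zero => simp [rank_one]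
  | succ i ih =>
    rw [jordanShift_eq_transpose_mul,
      rank_mul_pow_succ (coordProj_mul_transpose_self (blockSucc_injective μ))
        (coordProj_mul_transpose_self (blockIncl_injective μ)),
      ← jordanShift_sub_one_eq_mul_transpose, ih]
    simp only [Nat.sub_sub, add_comm 1 i]

end JordanShift

section SkewRealization

theorem exists_involutive_sign {F : Type*} [Fintype F] {m : ℕ} (h : Odd m → Even (Fintype.card F)) :
    ∃ (σ : F → F) (ε : F → ℤˣ), Function.Involutive σ ∧ ∀ x, ε (σ x) = (-1) ^ m * ε x := by
  obtain hm | hm := Nat.even_or_odd m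
  · exact ⟨id, 1, fun _ => rfl, by simp [hm]⟩
  · obtain ⟨r, hr⟩ := h hm
    let e : F ≃ Fin r × ℤˣ := Fintype.equivOfCardEq (by simp [hr, mul_two])
    exact ⟨fun x => e.symm ((e x).1, -(e x).2), fun x => (e x).2, fun x => by simp, by simp [hm]⟩

theorem IsSymplecticParts.exists_involutive_sign {p : ℕ} {lam : Fin p → ℕ}
    (h : IsSymplecticParts lam) :
    ∃ (τ : Fin p → Fin p) (η : Fin p → ℤˣ), Function.Involutive τ ∧ (∀ l, lam (τ l) = lam l) ∧
      ∀ l, η (τ l) = (-1) ^ lam l * η l := by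
  choose σ ε hσ hε using fun m : ℕ =>
    _root_.exists_involutive_sign (F := {l // lam l = m}) (m := m) fun hm => by
      rw [Fintype.card_subtype]; exact h m hm
  let τ (l : Fin p) : Fin p := σ (lam l) ⟨l, rfl⟩
  have τ_coe (m : ℕ) (x : {l // lam l = m}) : τ x = σ m x := by obtain ⟨l, rfl⟩ := x; rfl
  have ε_coe (m : ℕ) (x : {l // lam l = m}) : ε (lam x) ⟨x, rfl⟩ = ε m x := by
    obtain ⟨l, rfl⟩ := x; rfl
  refine ⟨τ, fun l => ε (lam l) ⟨l, rfl⟩, fun l => ?_, fun l => (σ (lam l) ⟨l, rfl⟩).2, fun l => ?_⟩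
  · rw [τ_coe, hσ]
  · rw [← hε, ← ε_coe]

section BlockReflection

variable {L k : Type*} {μ : L → ℕ} {τ : L → L}

/-- The reversal of Jordan blocks combined with a permutation `τ` of blocks of equal sizes. -/
def blockReflect (hμ : ∀ l, μ (τ l) = μ l) (x : Σ l, Fin (μ l)) : Σ l, Fin (μ l) :=
  ⟨τ x.1, x.2.rev.cast (hμ x.1).symm⟩

/-- The signs with which `blockReflect` becomes a form for which `jordanShift` is skew. -/
def blockSign (η : L → ℤˣ) (x : Σ l, Fin (μ l)) : ℤˣ :=
  η x.1 * (-1) ^ (x.2 : ℕ)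

theorem blockReflect_involutive (hμ : ∀ l, μ (τ l) = μ l) (hτ : Function.Involutive τ) :
    Function.Involutive (blockReflect hμ) := fun x =>
  sigma_fin_ext (hτ x.1) (by simp only [blockReflect, Fin.val_cast, Fin.val_rev, hμ]; omega)

theorem blockSign_blockReflect {η : L → ℤˣ} (hμ : ∀ l, μ (τ l) = μ l)
    (hη : ∀ l, η (τ l) = (-1) ^ (μ l + 1) * η l) (x : Σ l, Fin (μ l)) :
    blockSign η (blockReflect hμ x) = blockSign η x := by
  have hx := x.2.2
  have hexp : μ x.1 + 1 + (μ x.1 - (x.2 + 1)) = x.2 + 2 * (μ x.1 - x.2) := by omega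
  simp only [blockSign, blockReflect, hη, Fin.val_cast, Fin.val_rev]
  rw [mul_right_comm, ← pow_add, hexp, pow_add, pow_mul]
  simp [mul_comm]

variable [DecidableEq L]

theorem jordanShift_submatrix_blockReflect [Zero k] [One k] (hμ : ∀ l, μ (τ l) = μ l)
    (hτ : Function.Involutive τ) :
    (jordanShift k μ).submatrix (blockReflect hμ) (blockReflect hμ) = (jordanShift k μ)ᵀ := by
  ext x y
  refine if_congr ?_ rfl rfl
  have hx := x.2.2
  have hy := y.2.2
  simp only [blockReflect, Fin.val_cast, Fin.val_rev, hτ.injective.eq_iff, eq_comm (a := x.1)]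
  refine and_congr_right fun h => ?_
  have := congrArg μ h
  omega

/-- The diagonal matrix of block signs. -/
def signMatrix (k : Type*) [Ring k] (μ : L → ℕ) (η : L → ℤˣ) :
    Matrix (Σ l, Fin (μ l)) (Σ l, Fin (μ l)) k :=
  diagonal fun x => ((blockSign η x : ℤ) : k)

theorem signMatrix_submatrix_blockReflect [Ring k] {η : L → ℤˣ} (hμ : ∀ l, μ (τ l) = μ l)
    (hτ : Function.Involutive τ) (hη : ∀ l, η (τ l) = (-1) ^ (μ l + 1) * η l) :
    (signMatrix k μ η).submatrix (blockReflect hμ) (blockReflect hμ) = signMatrix k μ η := by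
  rw [signMatrix, submatrix_diagonal _ _ (blockReflect_involutive hμ hτ).injective]
  simp only [Function.comp_def, blockSign_blockReflect hμ hη]

variable [Fintype L] [Ring k]

theorem signMatrix_mul_self (μ : L → ℕ) (η : L → ℤˣ) :
    signMatrix k μ η * signMatrix k μ η = 1 := by
  rw [signMatrix, diagonal_mul_diagonal, ← diagonal_one]
  congr 1
  ext x
  rw [← Int.cast_mul, Int.units_coe_mul_self, Int.cast_one]

theorem signMatrix_mul_jordanShift_mul_signMatrix (μ : L → ℕ) (η : L → ℤˣ) :
    signMatrix k μ η * jordanShift k μ * signMatrix k μ η = -jordanShift k μ := by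
  ext x y
  rw [signMatrix, mul_diagonal, diagonal_mul, Matrix.neg_apply]
  by_cases h : x.1 = y.1 ∧ (x.2 : ℕ) = y.2 + 1
  · have hs : blockSign η x = -blockSign η y := by simp [blockSign, h.1, h.2, pow_succ]
    simp only [jordanShift, of_apply, if_pos h, hs]
    rw [mul_one, ← Int.cast_mul, Units.val_neg, neg_mul, Int.units_coe_mul_self, Int.cast_neg,
      Int.cast_one]
  · simp only [jordanShift, of_apply, if_neg h, mul_zero, zero_mul, neg_zero]

end BlockReflection

theorem coordProj_transpose_of_involutive {ι k : Type*} [DecidableEq ι] [NonAssocSemiring k]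
    {π : ι → ι} (hπ : Function.Involutive π) : (coordProj k π)ᵀ = coordProj k π := by
  ext x y
  exact if_congr (hπ.eq_iff.trans eq_comm) rfl rfl

variable {ι k : Type*} [Fintype ι] [DecidableEq ι]

theorem rank_pow_eq_of_semiconjBy [Field k] {P M N : Matrix ι ι k} (hP : IsUnit P)
    (h : SemiconjBy P M N) (i : ℕ) : (N ^ i).rank = (M ^ i).rank := by
  have hdet : IsUnit P.det := (isUnit_iff_isUnit_det P).mp hP
  rw [← rank_mul_eq_left_of_isUnit_det P (N ^ i) hdet, ← (h.pow_right i).eq,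
    rank_mul_eq_right_of_isUnit_det P (M ^ i) hdet]

variable [Field k] [IsAlgClosed k] [NeZero (2 : k)]

theorem exists_skew_of_adjoint {N a : Matrix ι ι k} (ha : a.IsSymm) (haa : a * a = 1)
    (hN : (N * a)ᵀ = -(N * a)) :
    ∃ ω : Matrix ι ι k, ωᵀ = -ω ∧ ∀ i, (ω ^ i).rank = (N ^ i).rank := by
  obtain ⟨c, hc⟩ := exists_eq_mul_transpose (ι := ι) ha (rank_le_card_width a)
  have hc_unit : IsUnit cᵀ :=
    (isUnit_transpose c).mpr (.of_mul_eq_one (cᵀ * a) (by rw [← Matrix.mul_assoc, ← hc, haa]))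
  refine ⟨cᵀ * (N * a) * c, ?_, rank_pow_eq_of_semiconjBy hc_unit ?_⟩
  · rw [transpose_mul, transpose_mul, hN, transpose_transpose, Matrix.neg_mul, Matrix.mul_neg]
    simp only [Matrix.mul_assoc]
  · rw [SemiconjBy, Matrix.mul_assoc _ c, ← hc, Matrix.mul_assoc, Matrix.mul_assoc, haa,
      Matrix.mul_one]

theorem exists_skew_of_signed_involution {N D P : Matrix ι ι k} (hDt : Dᵀ = D) (hDD : D * D = 1)
    (hPt : Pᵀ = P) (hPP : P * P = 1) (hPD : P * D * P = D) (hPN : P * N * P = Nᵀ)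
    (hDN : D * N * D = -N) :
    ∃ ω : Matrix ι ι k, ωᵀ = -ω ∧ ∀ i, (ω ^ i).rank = (N ^ i).rank := by
  have hcomm : P * D = D * P := by
    rw [← Matrix.mul_one (P * D), ← hPP, ← Matrix.mul_assoc, hPD]
  have hNcomm : P * Nᵀ = N * P := by
    rw [← hPN, ← Matrix.mul_assoc, ← Matrix.mul_assoc, hPP, Matrix.one_mul]
  have hDNcomm : D * N = -(N * D) := by
    rw [← Matrix.mul_one (D * N), ← hDD, ← Matrix.mul_assoc, hDN, Matrix.neg_mul]
  refine exists_skew_of_adjoint (a := D * P) ?_ ?_ ?_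
  · rw [IsSymm, transpose_mul, hDt, hPt, hcomm]
  · rw [Matrix.mul_assoc, ← Matrix.mul_assoc P, hPD, hDD]
  · calc (N * (D * P))ᵀ = P * D * Nᵀ := by rw [transpose_mul, transpose_mul, hDt, hPt]
      _ = D * N * P := by rw [hcomm, Matrix.mul_assoc, hNcomm, Matrix.mul_assoc]
      _ = -(N * (D * P)) := by rw [hDNcomm, Matrix.neg_mul, Matrix.mul_assoc]

theorem exists_skew_of_block_involution (k : Type*) [Field k] [IsAlgClosed k] [NeZero (2 : k)]
    {L : Type*} [Fintype L] [DecidableEq L] {μ : L → ℕ} {τ : L → L} {η : L → ℤˣ}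
    (hτ : Function.Involutive τ) (hμ : ∀ l, μ (τ l) = μ l)
    (hη : ∀ l, η (τ l) = (-1) ^ (μ l + 1) * η l) :
    ∃ ω : Matrix (Σ l, Fin (μ l)) (Σ l, Fin (μ l)) k,
      ωᵀ = -ω ∧ ∀ i, (ω ^ i).rank = ∑ l, (μ l - i) := by
  let π := blockReflect hμ
  have hπ : Function.Involutive π := blockReflect_involutive hμ hτ
  have hπt : (coordProj k π)ᵀ = coordProj k π := coordProj_transpose_of_involutive hπ
  have conj_eq_submatrix (S : Matrix _ _ k) :
      coordProj k π * S * coordProj k π = S.submatrix π π := by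
    simpa only [hπt] using coordProj_mul_mul_transpose π S
  simp only [← rank_jordanShift_pow (k := k)]
  refine exists_skew_of_signed_involution (D := signMatrix k μ η) (diagonal_transpose _)
    (signMatrix_mul_self _ η) hπt ?_ ?_ ?_
    (signMatrix_mul_jordanShift_mul_signMatrix _ η)
  · simpa only [hπt] using coordProj_mul_transpose_self (k := k) hπ.injective
  · rw [conj_eq_submatrix, signMatrix_submatrix_blockReflect hμ hτ hη]
  · rw [conj_eq_submatrix, jordanShift_submatrix_blockReflect hμ hτ]

theorem IsSymplecticParts.exists_skew (k : Type*) [Field k] [IsAlgClosed k] [NeZero (2 : k)]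
    {p : ℕ} {lam : Fin p → ℕ} (h : IsSymplecticParts lam) (hpos : ∀ l, 1 ≤ lam l) :
    ∃ ω : Matrix (Σ l, Fin (lam l - 1)) (Σ l, Fin (lam l - 1)) k,
      ωᵀ = -ω ∧ ∀ i, (ω ^ i).rank = ∑ l, (lam l - 1 - i) := by
  obtain ⟨τ, η, hτ, hlam, hη⟩ := h.exists_involutive_sign
  exact exists_skew_of_block_involution k (η := η) hτ (fun l => by rw [hlam])
    fun l => by rw [Nat.sub_add_cancel (hpos l), hη]

end SkewRealization

section SymplecticForm

variable {k : Type*} [CommRing k] {n : ℕ}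

/-- The identification of index types under which `Jmat` is a block matrix. -/
def sumFinEquiv (n : ℕ) : Fin n ⊕ Fin n ≃ Fin (2 * n) :=
  finSumFinEquiv.trans (finCongr (two_mul n).symm)

theorem Jmat_submatrix_sumFinEquiv (k : Type*) [CommRing k] (n : ℕ) :
    (Jmat k n).submatrix (sumFinEquiv n) (sumFinEquiv n) = -Matrix.J (Fin n) k := by
  ext (a | a) (b | b) <;> have ha := a.2 <;> have hb := b.2 <;>
    simp [sumFinEquiv, Jmat, Matrix.J, one_apply, Fin.ext_iff] <;> grind

theorem Jmat_eq_submatrix (k : Type*) [CommRing k] (n : ℕ) :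
    Jmat k n = (-Matrix.J (Fin n) k).submatrix (sumFinEquiv n).symm (sumFinEquiv n).symm := by
  rw [← Jmat_submatrix_sumFinEquiv, submatrix_submatrix]
  simp

theorem Jmat_transpose (k : Type*) [CommRing k] (n : ℕ) : (Jmat k n)ᵀ = -Jmat k n := by
  rw [Jmat_eq_submatrix, transpose_submatrix, transpose_neg, J_transpose, submatrix_neg]
  rfl

theorem Jmat_mul_self (k : Type*) [CommRing k] (n : ℕ) : Jmat k n * Jmat k n = -1 := by
  rw [Jmat_eq_submatrix, submatrix_mul_equiv, neg_mul_neg, J_squared, submatrix_neg]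
  simp

theorem Jmat_mul_Jmat_mul {m : Type*} (M : Matrix (Fin (2 * n)) m k) :
    Jmat k n * (Jmat k n * M) = -M := by
  rw [← Matrix.mul_assoc, Jmat_mul_self, Matrix.neg_mul, Matrix.one_mul]

theorem exists_Jmat_submatrix_eq_neg_J (k : Type*) [CommRing k] {ι : Type*} [Fintype ι]
    [DecidableEq ι] (hn : Fintype.card ι ≤ n) :
    ∃ f : ι ⊕ ι → Fin (2 * n), (Jmat k n).submatrix f f = -Matrix.J ι k := by
  obtain ⟨g⟩ := Function.Embedding.nonempty_of_card_le (hn.trans (Fintype.card_fin n).ge)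
  refine ⟨sumFinEquiv n ∘ Sum.map g g, ?_⟩
  rw [← submatrix_submatrix, Jmat_submatrix_sumFinEquiv]
  ext (a | a) (b | b) <;> simp [Matrix.J, one_apply, g.injective.eq_iff]

theorem mem_spSet_iff_isSymm {M : Matrix (Fin (2 * n)) (Fin (2 * n)) k} :
    M ∈ spSet k n ↔ (Jmat k n * M).IsSymm := by
  rw [IsSymm, transpose_mul, Jmat_transpose, Matrix.mul_neg, neg_eq_iff_add_eq_zero]
  rfl

theorem add_mem_spSet {M M' : Matrix (Fin (2 * n)) (Fin (2 * n)) k} (hM : M ∈ spSet k n)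
    (hM' : M' ∈ spSet k n) : M + M' ∈ spSet k n := by
  rw [mem_spSet_iff_isSymm] at *
  rw [Matrix.mul_add]
  exact hM.add hM'

theorem Jmat_mul_mem_spSet {S : Matrix (Fin (2 * n)) (Fin (2 * n)) k} (hS : S.IsSymm) :
    Jmat k n * S ∈ spSet k n := by
  rw [mem_spSet_iff_isSymm, Jmat_mul_Jmat_mul]
  exact hS.neg

end SymplecticForm

section Orbit

variable {k κ : Type*} [Field k] [Fintype κ] [DecidableEq κ] {n p : ℕ} {lam : Fin p → ℕ}
  {ω : Matrix κ κ k}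

theorem Jmat_mul_mul_transpose_mem_orbit (hω : ∀ i, (ω ^ i).rank = ∑ l, (lam l - 1 - i))
    {V R : Matrix (Fin (2 * n)) κ k} (hR : Vᵀ * R = 1) {c : k} (hc : c ≠ 0)
    (hV : Vᵀ * Jmat k n * V = c • ω) :
    Jmat k n * (V * Vᵀ) ∈ jordanOrbit k (2 * n) lam ∩ spSet k n := by
  refine ⟨fun i hi => ?_, Jmat_mul_mem_spSet (by rw [IsSymm, transpose_mul, transpose_transpose])⟩
  obtain ⟨i, rfl⟩ := Nat.exists_eq_add_of_le' hi
  have left_inv : -(Rᵀ * Jmat k n) * (Jmat k n * V) = 1 := by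
    rw [Matrix.neg_mul, Matrix.mul_assoc, Jmat_mul_Jmat_mul, Matrix.mul_neg, neg_neg,
      ← transpose_transpose V, ← transpose_mul, hR, transpose_one]
  rw [← Matrix.mul_assoc, rank_mul_pow_succ left_inv hR, ← Matrix.mul_assoc, hV, smul_pow,
    rank_smul_of_mem_nonZeroDivisors _ (mem_nonZeroDivisors_of_ne_zero (pow_ne_zero i hc)), hω]
  simp only [Nat.sub_sub, add_comm 1 i]

theorem transpose_mul_mul_add_smul {R m : Type*} [CommRing R] [Fintype m] {K : Matrix m m R}
    (hK : Kᵀ = -K) {ω : Matrix κ κ R} (hω : ωᵀ = -ω) {A B : Matrix m κ R} (hA : Aᵀ * K * A = 0)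
    (hB : Bᵀ * K * B = 0) (hAB : Aᵀ * K * B = 1) (t : R) :
    (A + t • (B * ω))ᵀ * K * (A + t • (B * ω)) = (2 * t) • ω := by
  have hBA : Bᵀ * K * A = -1 := by
    rw [← transpose_one, ← hAB]
    simp [Matrix.mul_assoc, hK]
  calc (A + t • (B * ω))ᵀ * K * (A + t • (B * ω))
      = Aᵀ * K * A + t • (Aᵀ * K * B * ω) + t • (ωᵀ * (Bᵀ * K * A))
          + (t * t) • (ωᵀ * (Bᵀ * K * B) * ω) := by
        simp only [transpose_add, transpose_smul, transpose_mul, Matrix.add_mul, Matrix.mul_add,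
          Matrix.smul_mul, Matrix.mul_smul, smul_add, mul_smul, Matrix.mul_assoc]
        abel
    _ = (2 * t) • ω := by
        rw [hA, hAB, hBA, hB, hω, two_mul, add_smul]
        simp

-- The orbit elements `J * (V * Vᵀ)` with `V = A + t • (B * ω)` degenerate to `t = 0`.
theorem Jmat_mul_mul_transpose_mem_zClosure_orbit [Infinite k] [NeZero (2 : k)] (hωt : ωᵀ = -ω)
    (hω : ∀ i, (ω ^ i).rank = ∑ l, (lam l - 1 - i)) {A B : Matrix (Fin (2 * n)) κ k}
    (hA : Aᵀ * Jmat k n * A = 0) (hB : Bᵀ * Jmat k n * B = 0) (hAB : Aᵀ * Jmat k n * B = 1) :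
    Jmat k n * (A * Aᵀ) ∈ zClosure (jordanOrbit k (2 * n) lam ∩ spSet k n) := by
  refine mul_mul_transpose_mem_zClosure_of_line _ A (B * ω) Polynomial.X_ne_zero fun t ht => ?_
  rw [Polynomial.eval_X] at ht
  have right_inv : (A + t • (B * ω))ᵀ * (Jmat k n * B) = 1 := by
    rw [← Matrix.mul_assoc]
    calc (A + t • (B * ω))ᵀ * Jmat k n * B
        = Aᵀ * Jmat k n * B + t • (ωᵀ * (Bᵀ * Jmat k n * B)) := by
          simp only [transpose_add, transpose_smul, transpose_mul, Matrix.add_mul, Matrix.smul_mul,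
            Matrix.mul_assoc]
      _ = 1 := by rw [hAB, hB, Matrix.mul_zero, smul_zero, add_zero]
  exact subset_zClosure _ (Jmat_mul_mul_transpose_mem_orbit hω right_inv
    (mul_ne_zero two_ne_zero ht) (transpose_mul_mul_add_smul (Jmat_transpose k n) hωt hA hB hAB t))

end Orbit

section NegPairs

variable {κ K : Type*} [Fintype κ]

theorem exists_injective_sumElim_neg_of_card_eq [InvolutiveNeg K] {R : Finset K}
    (hneg : ∀ x ∈ R, -x ∈ R) (hfix : ∀ x ∈ R, -x ≠ x) (hcard : R.card = 2 * Fintype.card κ) :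
    ∃ ρ : κ → K, Function.Injective (Sum.elim ρ (-ρ)) ∧ ∀ i, ρ i ∈ R := by
  classical
  let _ : LinearOrder K := IsWellOrder.linearOrder WellOrderingRel
  let F := R.filter fun x => x < -x
  have filter_not_eq : (R.filter fun x => ¬ x < -x) = F.image (-·) := by
    ext x
    simp only [F, Finset.mem_filter, Finset.mem_image]
    constructor
    · rintro ⟨hx, hlt⟩
      exact ⟨-x, ⟨hneg x hx, by simpa using lt_of_le_of_ne (not_lt.mp hlt) (hfix x hx)⟩, neg_neg x⟩
    · rintro ⟨y, ⟨hy, hlt⟩, rfl⟩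
      exact ⟨hneg y hy, by simpa using hlt.le⟩
  have card_F : Fintype.card κ = Fintype.card F := by
    have h := Finset.card_filter_add_card_filter_not (s := R) fun x => x < -x
    rw [filter_not_eq, Finset.card_image_of_injective _ neg_injective, hcard] at h
    change F.card + F.card = _ at h
    rw [Fintype.card_coe]
    omega
  let e : κ ≃ F := Fintype.equivOfCardEq card_F
  have lt_neg (c) : (e c : K) < -(e c : K) := (Finset.mem_filter.mp (e c).2).2
  have inj : Function.Injective fun c => (e c : K) := Subtype.val_injective.comp e.injective
  refine ⟨fun c => e c, inj.sumElim (neg_injective.comp inj) fun a b h => ?_,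
    fun c => (Finset.mem_filter.mp (e c).2).1⟩
  have h : (e a : K) = -(e b : K) := h
  have := lt_neg a
  rw [h, neg_neg] at this
  exact lt_asymm this (lt_neg b)

theorem exists_injective_sumElim_neg (κ K : Type*) [Countable κ] [Field K] [IsAlgClosed K]
    [NeZero (2 : K)] : ∃ ρ : κ → K, Function.Injective (Sum.elim ρ (-ρ)) := by
  have : Infinite K := IsAlgClosed.instInfinite
  have : Infinite ({0}ᶜ : Set K) := (Set.finite_singleton 0).infinite_compl.to_subtype
  obtain ⟨f, hf⟩ := exists_injective_nat κ
  let s (i : κ) : K := Infinite.natEmbedding ({0}ᶜ : Set K) (f i)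
  have s_injective : Function.Injective s :=
    Subtype.val_injective.comp ((Function.Embedding.injective _).comp hf)
  choose ρ hρ using fun i => IsAlgClosed.exists_eq_mul_self (s i)
  have eq_of_mul_self {i l : κ} (h : ρ i * ρ i = ρ l * ρ l) : i = l :=
    s_injective (by rw [hρ, hρ, h])
  have ρ_injective : Function.Injective ρ := fun i l h => eq_of_mul_self (by rw [h])
  refine ⟨ρ, ρ_injective.sumElim (neg_injective.comp ρ_injective) fun i l (h : ρ i = -ρ l) => ?_⟩
  obtain rfl : i = l := eq_of_mul_self (by rw [h, neg_mul_neg])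
  have ρ_zero : ρ i = 0 := (mul_eq_zero.mp (by linear_combination h : 2 * ρ i = 0)).resolve_left
    two_ne_zero
  exact (Infinite.natEmbedding ({0}ᶜ : Set K) (f i)).2 ((hρ i).trans (by rw [ρ_zero, mul_zero]))

end NegPairs

section SkewEigenbasis

open Polynomial

variable {k I : Type*} [Field k] [Fintype I] [DecidableEq I] {T : Matrix I I k}

theorem eval_neg_charpoly_of_skew (hI : Even (Fintype.card I)) (hT : Tᵀ = -T) (x : k) :
    T.charpoly.eval (-x) = T.charpoly.eval x := by
  rw [eval_charpoly, eval_charpoly, ← det_transpose, transpose_sub, hT,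
    ← one_mul (det (scalar I x - T)), ← hI.neg_one_pow, ← det_neg]
  congr 1
  rw [map_neg, transpose_neg, scalar_apply, diagonal_transpose]
  abel

theorem eval_zero_charpoly_ne_zero_of_skew [Infinite k] [NeZero (2 : k)]
    (hI : Even (Fintype.card I)) (hT : Tᵀ = -T) (hsep : T.charpoly.Separable) :
    T.charpoly.eval 0 ≠ 0 := by
  intro root_zero
  have comp_neg_X : T.charpoly.comp (-X) = T.charpoly :=
    Polynomial.funext fun x => by simp [eval_neg_charpoly_of_skew hI hT]
  have derivative_zero : T.charpoly.derivative.eval 0 = 0 := by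
    have h := congrArg (eval 0) (congrArg derivative comp_neg_X)
    simp only [derivative_comp, derivative_neg, derivative_X, eval_mul, eval_neg, eval_one,
      eval_comp, eval_X, neg_zero] at h
    have : (2 : k) * T.charpoly.derivative.eval 0 = 0 := by linear_combination -h
    exact (mul_eq_zero.mp this).resolve_left two_ne_zero
  obtain ⟨a, b, hab⟩ := hsep
  simpa [root_zero, derivative_zero] using congrArg (eval 0) hab

theorem exists_isUnit_mul_eq_mul_diagonal {ρ : I → k} (hρ : Function.Injective ρ)
    (hroot : ∀ i, T.charpoly.IsRoot (ρ i)) :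
    ∃ P : Matrix I I k, IsUnit P ∧ T * P = P * diagonal ρ := by
  choose v hv using fun i => ((Module.End.hasEigenvalue_iff_isRoot_charpoly (toLin' T) (ρ i)).mpr
    (by rw [charpoly_toLin']; exact hroot i)).exists_hasEigenvector
  refine ⟨(of v)ᵀ, linearIndependent_cols_iff_isUnit.mp
    (Module.End.eigenvectors_linearIndependent' (toLin' T) ρ hρ v hv), ?_⟩
  ext a i
  rw [mul_diagonal]
  exact (congrFun (hv i).apply_eq_smul a).trans (mul_comm _ _)

theorem exists_injective_sumElim_neg_isRoot_charpoly {κ : Type*} [Fintype κ] [DecidableEq κ]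
    [IsAlgClosed k] [NeZero (2 : k)] {T : Matrix (κ ⊕ κ) (κ ⊕ κ) k} (hT : Tᵀ = -T)
    (hsep : T.charpoly.Separable) :
    ∃ ρ : κ → k, Function.Injective (Sum.elim ρ (-ρ)) ∧
      ∀ i, T.charpoly.IsRoot (Sum.elim ρ (-ρ) i) := by
  classical
  have : Infinite k := IsAlgClosed.instInfinite
  have even_card : Even (Fintype.card (κ ⊕ κ)) := by simp
  have mem_roots (x : k) : x ∈ T.charpoly.roots.toFinset ↔ T.charpoly.eval x = 0 := by
    rw [Multiset.mem_toFinset, Polynomial.mem_roots T.charpoly_monic.ne_zero, IsRoot]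
  obtain ⟨ρ, hρ, hroot⟩ := exists_injective_sumElim_neg_of_card_eq (κ := κ)
    (R := T.charpoly.roots.toFinset)
    (fun x hx => by rwa [mem_roots, eval_neg_charpoly_of_skew even_card hT, ← mem_roots])
    (fun x hx h => by
      rw [mem_roots] at hx
      have : (2 : k) * x = 0 := by linear_combination -h
      rw [(mul_eq_zero.mp this).resolve_left two_ne_zero] at hx
      exact eval_zero_charpoly_ne_zero_of_skew even_card hT hsep hx)
    (by
      rw [Multiset.toFinset_card_of_nodup (nodup_roots hsep), IsAlgClosed.card_roots_eq_natDegree,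
        charpoly_natDegree_eq_dim, Fintype.card_sum, two_mul])
  refine ⟨ρ, hρ, Sum.rec (fun i => (mem_roots _).mp (hroot i)) fun i => ?_⟩
  exact (eval_neg_charpoly_of_skew even_card hT _).trans ((mem_roots _).mp (hroot i))

end SkewEigenbasis

section SkewNormalForm

variable {k κ : Type*} [Field k] [Fintype κ] [DecidableEq κ]

-- Eigenvectors for eigenvalues `a`, `b` with `a + b ≠ 0` are orthogonal, so the Gram matrix of the
-- eigenbasis only pairs the eigenvectors for opposite eigenvalues.
theorem exists_transpose_mul_self_eq_fromBlocks {T P : Matrix (κ ⊕ κ) (κ ⊕ κ) k} (hT : Tᵀ = -T)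
    {ρ : κ → k} (hρ : Function.Injective (Sum.elim ρ (-ρ))) (hP : IsUnit P)
    (hTP : T * P = P * diagonal (Sum.elim ρ (-ρ))) :
    ∃ g : κ → k, (∀ i, g i ≠ 0) ∧ Pᵀ * P = fromBlocks 0 (diagonal g) (diagonal g) 0 := by
  set δ := Sum.elim ρ (-ρ)
  have anticomm : diagonal δ * (Pᵀ * P) = -(Pᵀ * P * diagonal δ) := by
    have := congrArg (fun A => Aᵀ * P) hTP
    simp only [transpose_mul, hT, diagonal_transpose, Matrix.mul_assoc] at this
    rw [← this, Matrix.mul_assoc, ← hTP, Matrix.neg_mul, Matrix.mul_neg]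
  have orthogonal {i l : κ ⊕ κ} (h : δ i ≠ -δ l) : (Pᵀ * P) i l = 0 := by
    have := congrFun (congrFun anticomm i) l
    rw [diagonal_mul, Matrix.neg_apply, mul_diagonal] at this
    have : (δ i + δ l) * (Pᵀ * P) i l = 0 := by linear_combination this
    exact (mul_eq_zero.mp this).resolve_left fun h' => h (eq_neg_of_add_eq_zero_left h')
  let g (i : κ) : k := (Pᵀ * P) (Sum.inl i) (Sum.inr i)
  have gram : Pᵀ * P = fromBlocks 0 (diagonal g) (diagonal g) 0 := by
    ext (i | i) (l | l)
    · exact orthogonal (hρ.ne (a₂ := Sum.inr l) Sum.inl_ne_inr)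
    · obtain rfl | h := eq_or_ne i l
      · simp [g]
      · rw [fromBlocks_apply₁₂, diagonal_apply_ne _ h]
        exact orthogonal (by simpa [δ] using hρ.ne (Sum.inl_injective.ne h))
    · obtain rfl | h := eq_or_ne i l
      · simp [g, mul_apply, mul_comm]
      · rw [fromBlocks_apply₂₁, diagonal_apply_ne _ h]
        exact orthogonal (hρ.ne (Sum.inr_injective.ne h))
    · exact orthogonal (by simpa [δ] using hρ.ne (a₁ := Sum.inr i) (a₂ := Sum.inl l) Sum.inr_ne_inl)
  refine ⟨g, fun i hi => ?_, gram⟩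
  have gram_det : (Pᵀ * P).det ≠ 0 :=
    ((isUnit_iff_isUnit_det _).mp (((isUnit_transpose P).mpr hP).mul hP)).ne_zero
  refine gram_det (det_eq_zero_of_row_eq_zero (Sum.inl i) ?_)
  rw [gram]
  rintro (l | l)
  · rfl
  · simp [diagonal_apply, hi]

theorem exists_hyperbolic_mul_eq_mul_diagonal {T P : Matrix (κ ⊕ κ) (κ ⊕ κ) k} (hT : Tᵀ = -T)
    {ρ : κ → k} (hρ : Function.Injective (Sum.elim ρ (-ρ))) (hP : IsUnit P)
    (hTP : T * P = P * diagonal (Sum.elim ρ (-ρ))) :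
    ∃ H : Matrix (κ ⊕ κ) (κ ⊕ κ) k, Hᵀ * H = fromBlocks 0 1 1 0 ∧
      T * H = H * diagonal (Sum.elim ρ (-ρ)) := by
  obtain ⟨g, hg, gram⟩ := exists_transpose_mul_self_eq_fromBlocks hT hρ hP hTP
  have g_mul_inv : diagonal g * diagonal g⁻¹ = 1 := by
    rw [diagonal_mul_diagonal, ← diagonal_one]
    exact congrArg diagonal (funext fun i => mul_inv_cancel₀ (hg i))
  have inv_mul_g : diagonal g⁻¹ * diagonal g = 1 := mul_eq_one_comm.mp g_mul_inv
  refine ⟨P * diagonal (Sum.elim 1 g⁻¹), ?_, ?_⟩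
  · rw [transpose_mul, Matrix.mul_assoc, ← Matrix.mul_assoc Pᵀ, gram, diagonal_transpose,
      ← fromBlocks_diagonal, fromBlocks_multiply, fromBlocks_multiply]
    simp only [diagonal_one', Matrix.mul_zero, Matrix.zero_mul, Matrix.mul_one, add_zero,
      zero_add, g_mul_inv, inv_mul_g]
  · rw [← Matrix.mul_assoc, hTP, Matrix.mul_assoc, Matrix.mul_assoc, diagonal_mul_diagonal,
      diagonal_mul_diagonal]
    simp only [mul_comm]

theorem transpose_mul_fromBlocks_offDiagonal_mul {R : Type*} [CommRing R] {z : R}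
    (hz : z * z = -1) (c : R) (X Y : Matrix κ κ R) :
    (fromBlocks 1 (z • 1) (c • 1) (-(z * c) • 1))ᵀ * fromBlocks 0 X Y 0 *
        fromBlocks 1 (z • 1) (c • 1) (-(z * c) • 1) =
      fromBlocks (c • (X + Y)) ((z * c) • (Y - X)) ((z * c) • (X - Y)) (c • (X + Y)) := by
  simp only [fromBlocks_transpose, fromBlocks_multiply, transpose_smul, transpose_one,
    Matrix.smul_mul, Matrix.mul_smul, Matrix.one_mul, Matrix.mul_one, Matrix.mul_zero, zero_add,
    add_zero, fromBlocks_inj]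
  refine ⟨by module, by module, by module, ?_⟩
  calc _ = (-(z * z) * c) • (X + Y) := by module
    _ = c • (X + Y) := by rw [hz, neg_neg, one_mul]

theorem exists_orthogonal_transpose_mul_mul_eq_fromBlocks [IsAlgClosed k] [NeZero (2 : k)]
    {T : Matrix (κ ⊕ κ) (κ ⊕ κ) k} (hT : Tᵀ = -T) (hsep : T.charpoly.Separable) :
    ∃ (Q : Matrix (κ ⊕ κ) (κ ⊕ κ) k) (d : κ → k), (∀ i, d i ≠ 0) ∧ Q * Qᵀ = 1 ∧
      Qᵀ * T * Q = fromBlocks 0 (diagonal d) (-diagonal d) 0 := by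
  obtain ⟨ρ, hρ, hroot⟩ := exists_injective_sumElim_neg_isRoot_charpoly hT hsep
  obtain ⟨P, hP, hTP⟩ := exists_isUnit_mul_eq_mul_diagonal hρ hroot
  obtain ⟨H, gram, hTH⟩ := exists_hyperbolic_mul_eq_mul_diagonal hT hρ hP hTP
  obtain ⟨z, hz⟩ := IsAlgClosed.exists_eq_mul_self (-1 : k)
  have z_ne : z ≠ 0 := by rintro rfl; simp at hz
  have ρ_ne (i) : ρ i ≠ 0 := fun h =>
    Sum.inl_ne_inr (hρ (by simp [h] : Sum.elim ρ (-ρ) (Sum.inl i) = Sum.elim ρ (-ρ) (Sum.inr i)))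
  have half_add_half : (2⁻¹ : k) + 2⁻¹ = 1 := by rw [← two_mul, mul_inv_cancel₀ two_ne_zero]
  -- If `u ⬝ v = 1` and `u`, `v` are isotropic, then `u + v / 2`, `z (u - v / 2)` are orthonormal.
  let M : Matrix (κ ⊕ κ) (κ ⊕ κ) k := fromBlocks 1 (z • 1) ((2⁻¹ : k) • 1) (-(z * 2⁻¹) • 1)
  refine ⟨H * M, z • ρ, fun i => mul_ne_zero z_ne (ρ_ne i), ?_, ?_⟩
  · rw [mul_eq_one_comm, transpose_mul, Matrix.mul_assoc, ← Matrix.mul_assoc Hᵀ, gram,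
      ← Matrix.mul_assoc, transpose_mul_fromBlocks_offDiagonal_mul hz.symm, smul_add, ← add_smul,
      half_add_half, sub_self, smul_zero, one_smul, fromBlocks_one]
  · have hTM : (H * M)ᵀ * T * (H * M) = Mᵀ * (Hᵀ * H * diagonal (Sum.elim ρ (-ρ))) * M := by
      simp only [transpose_mul, Matrix.mul_assoc]
      rw [← Matrix.mul_assoc T, hTH, Matrix.mul_assoc]
    have offDiagonal : fromBlocks 0 1 1 0 * diagonal (Sum.elim ρ (-ρ)) =
        fromBlocks 0 (-diagonal ρ) (diagonal ρ) 0 := by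
      rw [← fromBlocks_diagonal, fromBlocks_multiply, diagonal_neg]
      simp
    have smul_eq : (z * 2⁻¹) • (diagonal ρ + diagonal ρ) = z • diagonal ρ := by
      rw [mul_smul, smul_add, ← add_smul, half_add_half, one_smul]
    rw [hTM, gram, offDiagonal, transpose_mul_fromBlocks_offDiagonal_mul hz.symm, neg_add_cancel,
      smul_zero, sub_neg_eq_add, smul_eq, ← neg_add', smul_neg, smul_eq, diagonal_smul]

end SkewNormalForm

section SecantVariety

variable {k κ : Type*} [Field k] [Fintype κ] [DecidableEq κ] {n p : ℕ} {lam : Fin p → ℕ}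
  {ω : Matrix κ κ k}

theorem Jmat_mul_mul_transpose_mem_zClosure_orbit_of_isUnit [Infinite k] [NeZero (2 : k)]
    (hωt : ωᵀ = -ω) (hω : ∀ i, (ω ^ i).rank = ∑ l, (lam l - 1 - i))
    {A B : Matrix (Fin (2 * n)) κ k} (hA : Aᵀ * Jmat k n * A = 0) (hB : Bᵀ * Jmat k n * B = 0)
    (hAB : IsUnit (Aᵀ * Jmat k n * B)) :
    Jmat k n * (A * Aᵀ) ∈ zClosure (jordanOrbit k (2 * n) lam ∩ spSet k n) := by
  obtain ⟨L, hL⟩ := hAB.exists_right_inv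
  refine Jmat_mul_mul_transpose_mem_zClosure_orbit hωt hω hA (B := B * L) ?_
    (by rw [← hL, Matrix.mul_assoc (Aᵀ * Jmat k n)])
  calc (B * L)ᵀ * Jmat k n * (B * L) = Lᵀ * (Bᵀ * Jmat k n * B) * L := by
        simp only [transpose_mul, Matrix.mul_assoc]
    _ = 0 := by rw [hB, Matrix.mul_zero, Matrix.zero_mul]

theorem Jmat_mul_mul_transpose_mem_zClosure_sums_of_separable [IsAlgClosed k] [NeZero (2 : k)]
    (hωt : ωᵀ = -ω) (hω : ∀ i, (ω ^ i).rank = ∑ l, (lam l - 1 - i))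
    {W : Matrix (Fin (2 * n)) (κ ⊕ κ) k} (hW : (Wᵀ * Jmat k n * W).charpoly.Separable) :
    Jmat k n * (W * Wᵀ) ∈ zClosure (Set.image2 (· + ·)
      (jordanOrbit k (2 * n) lam ∩ spSet k n) (jordanOrbit k (2 * n) lam ∩ spSet k n)) := by
  have : Infinite k := IsAlgClosed.instInfinite
  have skew : (Wᵀ * Jmat k n * W)ᵀ = -(Wᵀ * Jmat k n * W) := by
    simp [Matrix.mul_assoc, Jmat_transpose]
  obtain ⟨Q, d, hd, hQ, hQW⟩ := exists_orthogonal_transpose_mul_mul_eq_fromBlocks skew hW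
  obtain ⟨A, B, hWQ⟩ : ∃ A B, W * Q = fromCols A B := ⟨_, _, (fromCols_toCols _).symm⟩
  have isUnit_d : IsUnit (diagonal d) :=
    isUnit_diagonal.mpr (Pi.isUnit_iff.mpr fun i => (hd i).isUnit)
  have pairing : Qᵀ * (Wᵀ * Jmat k n * W) * Q = (W * Q)ᵀ * Jmat k n * (W * Q) := by
    simp only [transpose_mul, Matrix.mul_assoc]
  rw [pairing, hWQ, transpose_fromCols, fromRows_mul, fromRows_mul_fromCols,
    fromBlocks_inj] at hQW
  obtain ⟨hAA, hAB, hBA, hBB⟩ := hQW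
  have split : W * Wᵀ = A * Aᵀ + B * Bᵀ := by
    calc W * Wᵀ = W * Q * (W * Q)ᵀ := by
          rw [transpose_mul, Matrix.mul_assoc, ← Matrix.mul_assoc Q, hQ, Matrix.one_mul]
      _ = A * Aᵀ + B * Bᵀ := by rw [hWQ, transpose_fromCols, fromCols_mul_fromRows]
  rw [split, Matrix.mul_add]
  exact add_mem_zClosure_image2_add
    (Jmat_mul_mul_transpose_mem_zClosure_orbit_of_isUnit hωt hω hAA hBB (hAB ▸ isUnit_d))
    (Jmat_mul_mul_transpose_mem_zClosure_orbit_of_isUnit hωt hω hBB hAA (hBA ▸ isUnit_d.neg))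

theorem exists_separable_charpoly_transpose_mul_Jmat_mul [IsAlgClosed k] [NeZero (2 : k)]
    (hn : Fintype.card κ ≤ n) :
    ∃ W : Matrix (Fin (2 * n)) (κ ⊕ κ) k, (Wᵀ * Jmat k n * W).charpoly.Separable := by
  obtain ⟨d, hd⟩ := exists_injective_sumElim_neg κ k
  obtain ⟨f, hf⟩ := exists_Jmat_submatrix_eq_neg_J k hn
  let S : Matrix (κ ⊕ κ) (κ ⊕ κ) k := fromBlocks 0 (diagonal d) (diagonal d) 0
  have S_symm : S.IsSymm := by simp [S, IsSymm, fromBlocks_transpose]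
  obtain ⟨P, hP⟩ := exists_eq_mul_transpose (ι := κ ⊕ κ) S_symm (rank_le_card_width S)
  refine ⟨(coordProj k f)ᵀ * P, ?_⟩
  have charpoly_eq : (((coordProj k f)ᵀ * P)ᵀ * Jmat k n * ((coordProj k f)ᵀ * P)).charpoly =
      (diagonal (Sum.elim d (-d))).charpoly := by
    calc _ = (Pᵀ * (coordProj k f * Jmat k n * (coordProj k f)ᵀ * P)).charpoly := by
          simp only [transpose_mul, transpose_transpose, Matrix.mul_assoc]
      _ = (-Matrix.J κ k * S).charpoly := by
          rw [coordProj_mul_mul_transpose, hf, charpoly_mul_comm, Matrix.mul_assoc, ← hP]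
      _ = (diagonal (Sum.elim d (-d))).charpoly := by
          rw [← fromBlocks_diagonal]
          simp [S, Matrix.J, fromBlocks_neg, fromBlocks_multiply, Pi.neg_def]
  rw [charpoly_eq, charpoly_diagonal, Polynomial.separable_prod_X_sub_C_iff]
  exact hd

theorem Jmat_mul_mul_transpose_mem_zClosure_sums [IsAlgClosed k] [NeZero (2 : k)]
    (hn : Fintype.card κ ≤ n) (hωt : ωᵀ = -ω) (hω : ∀ i, (ω ^ i).rank = ∑ l, (lam l - 1 - i))
    (W : Matrix (Fin (2 * n)) (κ ⊕ κ) k) :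
    Jmat k n * (W * Wᵀ) ∈ zClosure (Set.image2 (· + ·)
      (jordanOrbit k (2 * n) lam ∩ spSet k n) (jordanOrbit k (2 * n) lam ∩ spSet k n)) := by
  have : Infinite k := IsAlgClosed.instInfinite
  obtain ⟨W₀, hW₀⟩ := exists_separable_charpoly_transpose_mul_Jmat_mul (k := k) hn
  let T := (matrixLine W (W₀ - W))ᵀ * (Jmat k n).map Polynomial.C * matrixLine W (W₀ - W)
  have T_eval (t : k) : T.map (Polynomial.eval t) =
      (W + t • (W₀ - W))ᵀ * Jmat k n * (W + t • (W₀ - W)) := by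
    simp only [T, map_eval_mul, transpose_map, map_C_map_eval, matrixLine_map_eval]
  obtain ⟨D, hD⟩ := exists_forall_eval_ne_zero_iff_separable_charpoly T
  have D_ne_zero : D ≠ 0 := by
    rintro rfl
    refine (hD 1).mpr ?_ Polynomial.eval_zero
    rwa [T_eval, one_smul, add_sub_cancel]
  refine mul_mul_transpose_mem_zClosure_of_line _ W (W₀ - W) D_ne_zero fun t ht => ?_
  refine Jmat_mul_mul_transpose_mem_zClosure_sums_of_separable hωt hω ?_
  rw [← T_eval]
  exact (hD t).mp ht

end SecantVariety

section Main

variable {k : Type*} [Field k] {n p : ℕ} {lam : Fin p → ℕ}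

theorem mem_spSet_and_rank_le_of_mem_zClosure_sums {M : Matrix (Fin (2 * n)) (Fin (2 * n)) k}
    (hM : M ∈ zClosure (Set.image2 (· + ·) (jordanOrbit k (2 * n) lam ∩ spSet k n)
      (jordanOrbit k (2 * n) lam ∩ spSet k n))) :
    M ∈ spSet k n ∧ M.rank ≤ 2 * ∑ l, (lam l - 1) := by
  refine ⟨mem_spSet_of_mem_zClosure ?_ hM, rank_le_of_mem_zClosure ?_ hM⟩
  · rintro _ ⟨x, ⟨-, hx⟩, y, ⟨-, hy⟩, rfl⟩
    exact add_mem_spSet hx hy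
  · rintro _ ⟨x, ⟨hx, -⟩, y, ⟨hy, -⟩, rfl⟩
    have hx := hx 1 le_rfl
    have hy := hy 1 le_rfl
    rw [pow_one] at hx hy
    exact (matrix_rank_add_le x y).trans (by rw [hx, hy, two_mul])

theorem exists_eq_Jmat_mul_mul_transpose [IsAlgClosed k] [NeZero (2 : k)] {ι : Type*} [Fintype ι]
    {M : Matrix (Fin (2 * n)) (Fin (2 * n)) k} (hM : M ∈ spSet k n)
    (hr : M.rank ≤ Fintype.card ι) :
    ∃ W : Matrix (Fin (2 * n)) ι k, M = Jmat k n * (W * Wᵀ) := by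
  obtain ⟨W, hW⟩ := exists_eq_mul_transpose (mem_spSet_iff_isSymm.mp hM).neg
    (by rw [← Matrix.neg_mul]; exact (rank_mul_le_right _ _).trans hr)
  exact ⟨W, by rw [← hW, Matrix.mul_neg, Jmat_mul_Jmat_mul, neg_neg]⟩

theorem sum_pred_parts (hpos : ∀ l, 1 ≤ lam l) : ∑ l, (lam l - 1) = ∑ l, lam l - p := by
  rw [Finset.sum_tsub_distrib _ fun l _ => hpos l]
  simp

end Main

theorem stmt4_general {k : Type*} [Field k] [IsAlgClosed k] [NeZero (2 : k)] {n p j : ℕ}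
    (lam : Fin p → ℕ) (hpos : ∀ l, 1 ≤ lam l) (hsum : ∑ l, lam l = 2 * n)
    (hsymp : IsSymplecticParts lam) (hj : j = 2 * n - p) (hjn : j ≤ n) :
    zClosure (Set.image2 (· + ·) (jordanOrbit k (2 * n) lam ∩ spSet k n)
        (jordanOrbit k (2 * n) lam ∩ spSet k n))
      = {M | M ∈ spSet k n ∧ M.rank ≤ 2 * j} := by
  have sum_eq : ∑ l, (lam l - 1) = j := by rw [sum_pred_parts hpos, hsum, hj]
  have card_eq : Fintype.card (Σ l, Fin (lam l - 1)) = j := by simp [sum_eq]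
  refine Set.Subset.antisymm (fun M hM => sum_eq ▸ mem_spSet_and_rank_le_of_mem_zClosure_sums hM) ?_
  rintro M ⟨hM, hr⟩
  obtain ⟨W, rfl⟩ := exists_eq_Jmat_mul_mul_transpose
    (ι := (Σ l, Fin (lam l - 1)) ⊕ (Σ l, Fin (lam l - 1))) hM
    (by rwa [Fintype.card_sum, card_eq, ← two_mul])
  obtain ⟨ω, hωt, hω⟩ := hsymp.exists_skew k hpos
  exact Jmat_mul_mul_transpose_mem_zClosure_sums (card_eq.trans_le hjn) hωt hω W

/-- For a symplectic partition `λ` of `2n` with `j := 2n − p < n`, the conical secant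
variety of the nilpotent `Sp_{2n}`-orbit `O_λ ∩ sp_{2n}` is the set of symplectic matrices
of rank at most `2j`. -/
theorem stmt4 {k : Type*} [Field k] [IsAlgClosed k] [CharZero k]
    {n p j : ℕ} (lam : Fin p → ℕ)
    (hanti : Antitone lam) (hpos : ∀ l, 1 ≤ lam l)
    (hsum : ∑ l, lam l = 2 * n)
    (hsymp : IsSymplecticParts lam)
    (hj : j = 2 * n - p) (hjn : j < n) :
    zClosure (Set.image2 (· + ·) (jordanOrbit k (2 * n) lam ∩ spSet k n)
        (jordanOrbit k (2 * n) lam ∩ spSet k n))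
      = {M | M ∈ spSet k n ∧ M.rank ≤ 2 * j} :=
  stmt4_general lam hpos hsum hsymp hj hjn.le
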